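/- Let L be a finite set of leaves with indicators I_ℓ forming a partition of the finite input space 𝒳 (the new tree to be added), and let F : 𝒳 → ℝ be a fixed forest F(x) = Σ_{j∈K} θ^F_j I^F_j(x) with finite leaf index set K, {0,1}-valued indicators I^F_j, and fixed parameters θ^F_j. Let a training set of N ≥ 1 samples be given, where sample d has label y_d ∈ ℝ and conditional distribution μ_d on 𝒳 (a probability mass function), and assume Σ_{d=1}^{N} q_d(ℓ) > 0 for every ℓ ∈ L, where q_d(ℓ) := Σ_{x∈𝒳} μ_d(x) I_ℓ(x). Define θ*_ℓ = (Σ_{d=1}^{N} [ y_d q_d(ℓ) − Σ_{j∈K} θ^F_j r_d(ℓ,j) ]) / (Σ_{d=1}^{N} q_d(ℓ)), where r_d(ℓ,j) := Σ_{x∈𝒳} μ_d(x) I_ℓ(x) I^F_j(x). Then Θ* = (θ*_ℓ)_{ℓ∈L} minimizes the boosted expected MSE loss: for every Θ ∈ ℝ^L, ℒ_Boost(Θ*) ≤ ℒ_Boost(Θ), where ℒ_Boost(Θ) = (1/N) Σ_{d=1}^{N} Σ_{x∈𝒳} μ_d(x) (y_d − F(x) − Σ_{ℓ∈L} θ_ℓ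 I_ℓ(x))². -/

import Mathlib

open Finset

lemma aux_disj {X L : Type*} [Fintype L] (I : L → X → ℝ)
    (hI : ∀ ℓ x, I ℓ x = 0 ∨ I ℓ x = 1) (hpart : ∀ x, ∑ ℓ, I ℓ x = 1)
    (T : L → ℝ) (ℓ : L) (x : X) :
    (∑ k, T k * I k x) * I ℓ x = T ℓ * I ℓ x := by
  classical
  rcases hI ℓ x with h | h
  · simp [h]
  · have h1 := hpart x
    rw [← Finset.add_sum_erase _ _ (Finset.mem_univ ℓ), h] at h1
    have h2 : ∑ k ∈ Finset.univ.erase ℓ, I k x = 0 := by linarith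
    have h3 := (Finset.sum_eq_zero_iff_of_nonneg (fun k _ => by
      rcases hI k x with h | h <;> rw [h] <;> norm_num)).1 h2
    rw [← Finset.add_sum_erase _ _ (Finset.mem_univ ℓ),
      Finset.sum_eq_zero (fun k hk => by rw [h3 k hk, mul_zero]), h]
    ring

/-- **Expected parameters of boosted MSE loss (Proposition).**
Given a fixed forest F(x) = Σ_{j∈K} θF_j IF_j(x) and a new tree structure with indicators
I_ℓ partitioning the input space, assuming every leaf has positive total mass, the
parameters θ*_ℓ = (Σ_d [y_d q_d(ℓ) − Σ_j θF_j r_d(ℓ,j)]) / (Σ_d q_d(ℓ)) minimize the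
boosted expected MSE loss ℒ_Boost(Θ) = (1/N) Σ_d E_{x∼μ_d}[(y_d − F(x) − f_Θ(x))²]. -/
theorem expected_parameters_boosted_mse
    {X L K : Type*} [Fintype X] [Fintype L] [Fintype K]
    (I : L → X → ℝ)
    (hI : ∀ ℓ x, I ℓ x = 0 ∨ I ℓ x = 1)
    (hpart : ∀ x, ∑ ℓ, I ℓ x = 1)
    (IF : K → X → ℝ) (θF : K → ℝ)
    (hIF : ∀ j x, IF j x = 0 ∨ IF j x = 1)
    (N : ℕ) (hN : 1 ≤ N)
    (y : Fin N → ℝ) (μ : Fin N → X → ℝ)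
    (hμ : ∀ d x, 0 ≤ μ d x)
    (hμ1 : ∀ d, ∑ x, μ d x = 1)
    (hmass : ∀ ℓ : L, 0 < ∑ d, ∑ x, μ d x * I ℓ x)
    (Θstar : L → ℝ)
    (hΘstar : ∀ ℓ : L,
      Θstar ℓ = (∑ d, (y d * (∑ x, μ d x * I ℓ x)
                  - ∑ j, θF j * (∑ x, μ d x * I ℓ x * IF j x)))
                / (∑ d, ∑ x, μ d x * I ℓ x)) :
    ∀ Θ : L → ℝ,
      (1 / (N : ℝ)) * ∑ d, ∑ x,
          μ d x * (y d - (∑ j, θF j * IF j x) - ∑ ℓ, Θstar ℓ * I ℓ x) ^ 2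
        ≤ (1 / (N : ℝ)) * ∑ d, ∑ x,
          μ d x * (y d - (∑ j, θF j * IF j x) - ∑ ℓ, Θ ℓ * I ℓ x) ^ 2 := by
  intro Θ
  apply mul_le_mul_of_nonneg_left _ (by positivity)
  have normal : ∀ ℓ, ∑ d, ∑ x, μ d x *
      (y d - (∑ j, θF j * IF j x) - ∑ k, Θstar k * I k x) * I ℓ x = 0 := by
    intro ℓ
    have h := hΘstar ℓ
    rw [eq_div_iff (hmass ℓ).ne'] at h
    have h2 : ∑ d, ∑ x, μ d x *
        (y d - (∑ j, θF j * IF j x) - ∑ k, Θstar k * I k x) * I ℓ x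
        = (∑ d, (y d * (∑ x, μ d x * I ℓ x)
                  - ∑ j, θF j * (∑ x, μ d x * I ℓ x * IF j x)))
          - Θstar ℓ * ∑ d, ∑ x, μ d x * I ℓ x := by
      rw [Finset.mul_sum, ← Finset.sum_sub_distrib]
      refine Finset.sum_congr rfl fun d _ => ?_
      have h3 : ∑ j, θF j * (∑ x, μ d x * I ℓ x * IF j x)
          = ∑ x, μ d x * I ℓ x * ∑ j, θF j * IF j x := by
        simp_rw [Finset.mul_sum]
        rw [Finset.sum_comm]
        exact Finset.sum_congr rfl fun x _ => Finset.sum_congr rfl fun j _ => by ring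
      rw [h3, Finset.mul_sum, Finset.mul_sum, ← Finset.sum_sub_distrib,
        ← Finset.sum_sub_distrib]
      refine Finset.sum_congr rfl fun x _ => ?_
      have h4 := aux_disj I hI hpart Θstar ℓ x
      linear_combination (-μ d x) * h4
    rw [h2, ← h]
    ring
  have cross : ∑ d, ∑ x, μ d x *
      (y d - (∑ j, θF j * IF j x) - ∑ k, Θstar k * I k x) *
      (∑ ℓ, (Θstar ℓ - Θ ℓ) * I ℓ x) = 0 := by
    have h : ∑ ℓ, (Θstar ℓ - Θ ℓ) * ∑ d, ∑ x, μ d x *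
      (y d - (∑ j, θF j * IF j x) - ∑ k, Θstar k * I k x) * I ℓ x = 0 :=
      Finset.sum_eq_zero fun ℓ _ => by rw [normal ℓ, mul_zero]
    rw [← h]
    simp_rw [Finset.mul_sum (s := (Finset.univ : Finset (Fin N)))]
    conv_rhs => rw [Finset.sum_comm]
    refine Finset.sum_congr rfl fun d _ => ?_
    simp_rw [Finset.mul_sum (s := (Finset.univ : Finset X))]
    conv_rhs => rw [Finset.sum_comm]
    refine Finset.sum_congr rfl fun x _ => ?_
    rw [Finset.mul_sum]
    exact Finset.sum_congr rfl fun ℓ _ => by ring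
  have key : ∑ d, ∑ x, (μ d x * (y d - (∑ j, θF j * IF j x) - ∑ ℓ, Θstar ℓ * I ℓ x) ^ 2
      + 2 * (μ d x * (y d - (∑ j, θF j * IF j x) - ∑ k, Θstar k * I k x) *
      (∑ ℓ, (Θstar ℓ - Θ ℓ) * I ℓ x)))
      ≤ ∑ d, ∑ x, μ d x * (y d - (∑ j, θF j * IF j x) - ∑ ℓ, Θ ℓ * I ℓ x) ^ 2 := by
    refine Finset.sum_le_sum fun d _ => Finset.sum_le_sum fun x _ => ?_
    simp_rw [sub_mul, Finset.sum_sub_distrib]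
    have := mul_nonneg (hμ d x) (sq_nonneg (∑ ℓ, Θstar ℓ * I ℓ x - ∑ ℓ, Θ ℓ * I ℓ x))
    linarith
  simp_rw [Finset.sum_add_distrib, ← Finset.mul_sum] at key
  rw [cross] at key
  linarith
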